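/- (Strang–Fix conditions, Corollary 4.2, case m ≥ 1.) For every integer n ≥ 2, every real μ > 1, and every integer m ≥ 1, there exists a continuous function F : ℝ → ℂ with F(ω) ≠ 0 for every ω ∈ ℝ such that Φ^{(n,m)}(ω) = ((1 − e^{-iω 2^{-m}})/(iω 2^{-m}))^{n-1} · F(ω) for all ω ≠ 0. In particular Φ^{(n,m)} has a zero of order exactly n − 1 at every point ω = 2^{m+1} π α with α ∈ ℤ \ {0}. -/

import Mathlib

open MeasureTheory Filter Complex

/-- Binomial coefficient `binom p q` extended to integer `q`, zero outside `0 ≤ q ≤ p`. -/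
noncomputable def binomZ (p : ℕ) (q : ℤ) : ℝ :=
  if 0 ≤ q then (p.choose q.toNat : ℝ) else 0

/-- The nonstationary mask `a^{(n,m)}_α` with tension parameter `μ`. -/
noncomputable def maskNS (n m : ℕ) (μ : ℝ) (α : ℤ) : ℝ :=
  if m = 0 then (if α = 0 ∨ α = 1 then 1/2 else 0)
  else if 0 ≤ α ∧ α ≤ (n : ℤ) + 1 then
    (2 : ℝ) ^ (-((n : ℝ) + 1 + (m : ℝ) ^ (-μ))) *
      (binomZ (n+1) α + 4 * ((2 : ℝ) ^ ((m : ℝ) ^ (-μ)) - 1) * binomZ (n-1) (α-1))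
  else 0

/-- The symbol `A^{(n,m)}(z) = Σ_{α=0}^{n+1} a^{(n,m)}_α z^α`. -/
noncomputable def symbolNS (n m : ℕ) (μ : ℝ) (z : ℂ) : ℂ :=
  ∑ α ∈ Finset.range (n+2), (maskNS n m μ (α : ℤ) : ℂ) * z ^ α

/-- Partial product `∏_{k=m}^{N-1} A^{(n,k)}(e^{-iω/2^{k+1}})` of the infinite product
defining the Fourier transform `Φ^{(n,m)}` of the refinable ripplet `φ^{(n,m)}`. -/
noncomputable def partialProdNS (n m : ℕ) (μ : ℝ) (ω : ℝ) (N : ℕ) : ℂ :=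
  ∏ k ∈ Finset.Ico m N, symbolNS n k μ (Complex.exp (-(Complex.I * ω) / 2 ^ (k + 1)))

/-!
Write `c_k = 2^{k^{-μ}}`. The binomial sums in the mask give the symbol
`A^{(n,k)}(z) = ((1 + z)/2)^{n-1} (z + (1 - z)²/(4c_k))`, and at `z = e^{-iθ}` the last factor is
`z (1 - c_k⁻¹ sin²(θ/2))` because `(1 - z)² = -4z sin²(θ/2)`. With `θ = ω/2^{k+1}` the three factors
are multiplied over `k ≥ m` separately. The factors `(1 + z)/2` telescope, by
`1 - z² = (1 - z)(1 + z)`, to `(1 - e^{-iω2^{-m}})/(iω2^{-m})`; the factors `z` give the exponential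
of a geometric series; and the factors `1 - c_k⁻¹ sin²(ω/2^{k+2})` form a locally uniformly
convergent product, none of whose factors vanishes since `0 < c_k⁻¹ < 1`.
-/

open scoped Topology

section InfiniteProducts

theorem continuousOn_tprod_one_add {ι α R : Type*} [TopologicalSpace α] [LocallyCompactSpace α]
    [NormedCommRing R] [NormOneClass R] [CompleteSpace R] {f : ι → α → R} {u : ι → ℝ} {K : Set α}
    (hK : IsOpen K) (hu : Summable u) (hf : ∀ i, ContinuousOn (f i) K)
    (hfu : ∀ i, ∀ x ∈ K, ‖f i x‖ ≤ u i) :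
    ContinuousOn (fun x ↦ ∏' i, (1 + f i x)) K := by
  have hprod := hu.hasProdLocallyUniformlyOn_one_add hK (.of_forall hfu) hf
  refine (hasProdLocallyUniformlyOn_iff_tendstoLocallyUniformlyOn.mp hprod).continuousOn
    (.of_forall fun s ↦ ?_)
  exact continuousOn_finsetProd _ fun i _ ↦ continuousOn_const.add (hf i)

/-- The product `∏ᵢ (1 - bᵢ sin²(rᵢ x))`, the part of `Φ^{(n,m)}` contributed by the quadratic
factors of the symbols. It is a `tprod`, hence `1` where the product does not converge. -/
noncomputable def sinSqProd {ι : Type*} (b r : ι → ℝ) (x : ℝ) : ℝ :=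
  ∏' i, (1 - b i * Real.sin (r i * x) ^ 2)

variable {ι : Type*} {b r : ι → ℝ}

theorem norm_neg_mul_sin_sq_le {b : ℝ} (hb : |b| ≤ 1) (r x : ℝ) :
    ‖-(b * Real.sin (r * x) ^ 2)‖ ≤ r ^ 2 * x ^ 2 :=
  calc ‖-(b * Real.sin (r * x) ^ 2)‖ = |b| * Real.sin (r * x) ^ 2 := by
        rw [norm_neg, Real.norm_eq_abs, abs_mul, abs_sq]
    _ ≤ 1 * (r * x) ^ 2 := mul_le_mul hb Real.sin_sq_le_sq (sq_nonneg _) zero_le_one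
    _ = r ^ 2 * x ^ 2 := by ring

theorem summable_norm_neg_mul_sin_sq (hb : ∀ i, |b i| ≤ 1) (hr : Summable fun i ↦ r i ^ 2)
    (x : ℝ) : Summable fun i ↦ ‖-(b i * Real.sin (r i * x) ^ 2)‖ :=
  .of_nonneg_of_le (fun _ ↦ norm_nonneg _) (fun i ↦ norm_neg_mul_sin_sq_le (hb i) (r i) x)
    (hr.mul_right _)

theorem hasProd_sinSqProd (hb : ∀ i, |b i| ≤ 1) (hr : Summable fun i ↦ r i ^ 2) (x : ℝ) :
    HasProd (fun i ↦ 1 - b i * Real.sin (r i * x) ^ 2) (sinSqProd b r x) := by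
  have hmul := multipliable_one_add_of_summable (summable_norm_neg_mul_sin_sq hb hr x)
  simp only [← sub_eq_add_neg] at hmul
  exact hmul.hasProd

theorem sinSqProd_ne_zero (hb : ∀ i, |b i| < 1) (hr : Summable fun i ↦ r i ^ 2) (x : ℝ) :
    sinSqProd b r x ≠ 0 := by
  have hfactor (i : ι) : 1 + -(b i * Real.sin (r i * x) ^ 2) ≠ 0 := by
    have hlt : b i * Real.sin (r i * x) ^ 2 < 1 :=
      calc b i * Real.sin (r i * x) ^ 2 ≤ |b i| * 1 := by
            gcongr
            exacts [le_abs_self _, Real.sin_sq_le_one _]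
        _ < 1 := by simpa using hb i
    linarith
  simpa only [sinSqProd, sub_eq_add_neg] using tprod_one_add_ne_zero_of_summable hfactor
    (summable_norm_neg_mul_sin_sq (fun i ↦ (hb i).le) hr x)

theorem continuous_sinSqProd (hb : ∀ i, |b i| ≤ 1) (hr : Summable fun i ↦ r i ^ 2) :
    Continuous (sinSqProd b r) := by
  refine continuous_iff_continuousAt.mpr fun x ↦ ?_
  have hcont : ContinuousOn (sinSqProd b r) (Metric.ball 0 (|x| + 1)) := by
    unfold sinSqProd
    simp only [sub_eq_add_neg]
    refine continuousOn_tprod_one_add Metric.isOpen_ball (hr.mul_right ((|x| + 1) ^ 2))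
      (fun i ↦ by fun_prop) fun i y hy ↦ (norm_neg_mul_sin_sq_le (hb i) (r i) y).trans ?_
    have hy' : |y| ≤ |x| + 1 := by simpa using (mem_ball_zero_iff.mp hy).le
    rw [← sq_abs y]
    gcongr
  exact hcont.continuousAt (Metric.isOpen_ball.mem_nhds (by simp))

theorem tendsto_prod_exp_div_two_pow (w : ℂ) :
    Tendsto (fun N ↦ ∏ i ∈ Finset.range N, exp (w / 2 ^ (i + 1))) atTop (𝓝 (exp w)) := by
  have hgeom := (hasSum_geometric_of_norm_lt_one (ξ := (2⁻¹ : ℂ)) (by norm_num)).mul_left (w / 2)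
  have hterm (i : ℕ) : w / 2 * 2⁻¹ ^ i = w / 2 ^ (i + 1) := by
    rw [inv_pow]
    field
  have hsum : w / 2 * (1 - 2⁻¹)⁻¹ = w := by
    field
  simp only [hterm, hsum] at hgeom
  exact hgeom.cexp.tendsto_prod_nat

theorem prod_one_add_exp_div_two_mul (w : ℂ) (N : ℕ) :
    (∏ i ∈ Finset.range N, (1 + exp (w / 2 ^ (i + 1))) / 2) * (2 ^ N * (exp (w / 2 ^ N) - 1)) =
      exp w - 1 := by
  induction N with
  | zero => simp
  | succ N ih =>
    have hsq : exp (w / 2 ^ N) = exp (w / 2 ^ (N + 1)) ^ 2 := by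
      rw [← exp_nat_mul]
      congr 1
      field
    rw [Finset.prod_range_succ, ← ih, hsq]
    ring

theorem tendsto_two_pow_mul_exp_div_sub_one (w : ℂ) :
    Tendsto (fun N : ℕ ↦ 2 ^ N * (exp (w / 2 ^ N) - 1)) atTop (𝓝 w) := by
  have hderiv : HasDerivAt (fun t : ℂ ↦ exp (t * w)) w 0 := by
    simpa using ((hasDerivAt_id (0 : ℂ)).mul_const w).cexp
  have hseq : Tendsto (fun N : ℕ ↦ (1 / 2 : ℂ) ^ N) atTop (𝓝[≠] 0) :=
    tendsto_nhdsWithin_iff.mpr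
      ⟨tendsto_pow_atTop_nhds_zero_of_norm_lt_one (by norm_num), .of_forall fun N ↦ by simp⟩
  refine (hderiv.tendsto_slope_zero.comp hseq).congr fun N ↦ ?_
  simp [div_eq_inv_mul]

theorem tendsto_prod_one_add_exp_div_two {w : ℂ} (hw : w ≠ 0) :
    Tendsto (fun N ↦ ∏ i ∈ Finset.range N, (1 + exp (w / 2 ^ (i + 1))) / 2) atTop
      (𝓝 ((exp w - 1) / w)) := by
  have hlim := tendsto_two_pow_mul_exp_div_sub_one w
  refine (tendsto_const_nhds.div hlim hw).congr' ?_
  filter_upwards [hlim.eventually_ne hw] with N hN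
  exact div_eq_of_eq_mul hN (prod_one_add_exp_div_two_mul w N).symm

end InfiniteProducts

section Symbol

variable {n k : ℕ} (μ : ℝ)

theorem sum_range_choose_mul_pow {R : Type*} [CommSemiring R] (p : ℕ) (z : R) :
    ∑ α ∈ Finset.range (p + 1), (p.choose α : R) * z ^ α = (1 + z) ^ p := by
  simp [add_comm 1 z, add_pow, mul_comm]

@[simp]
theorem binomZ_natCast (p q : ℕ) : binomZ p q = p.choose q := by
  simp [binomZ]

@[simp]
theorem binomZ_neg_one (p : ℕ) : binomZ p (-1) = 0 := by
  simp [binomZ]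

theorem sum_range_binomZ_sub_one_mul_pow (p : ℕ) (z : ℂ) :
    ∑ α ∈ Finset.range (p + 3), (binomZ p (α - 1) : ℂ) * z ^ α = z * (1 + z) ^ p := by
  have hlast : binomZ p ((p : ℤ) + 1) = 0 := by
    exact_mod_cast (binomZ_natCast p (p + 1)).trans (by simp)
  rw [Finset.sum_range_succ', Finset.sum_range_succ, ← sum_range_choose_mul_pow, Finset.mul_sum]
  simp [hlast, pow_succ', mul_left_comm]

/-- The constant `c_k = 2^{k^{-μ}}` through which the tension parameter `μ` enters the mask of
level `k`. -/
noncomputable def tensionConst (k : ℕ) : ℝ := 2 ^ (k : ℝ) ^ (-μ)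

theorem tensionConst_pos (k : ℕ) : 0 < tensionConst μ k := by
  unfold tensionConst
  positivity

theorem abs_inv_tensionConst_lt_one (hk : k ≠ 0) : |(tensionConst μ k)⁻¹| < 1 := by
  rw [abs_of_pos (inv_pos.mpr (tensionConst_pos μ k))]
  exact inv_lt_one_of_one_lt₀ (Real.one_lt_rpow one_lt_two (by positivity))

theorem maskNS_eq_of_le (hk : k ≠ 0) {α : ℕ} (hα : α ≤ n + 1) :
    maskNS n k μ α = (2 ^ (n + 1) * tensionConst μ k)⁻¹ *
      ((n + 1).choose α + 4 * (tensionConst μ k - 1) * binomZ (n - 1) (α - 1)) := by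
  have hscale : (2 : ℝ) ^ (-((n : ℝ) + 1 + (k : ℝ) ^ (-μ))) =
      (2 ^ (n + 1) * tensionConst μ k)⁻¹ := by
    rw [Real.rpow_neg two_pos.le, Real.rpow_add two_pos, ← Nat.cast_add_one, Real.rpow_natCast,
      tensionConst]
  rw [maskNS, if_neg hk, if_pos (by omega), hscale, binomZ_natCast, tensionConst]

theorem symbolNS_eq (hn : n ≠ 0) (hk : k ≠ 0) (z : ℂ) :
    symbolNS n k μ z =
      ((1 + z) / 2) ^ (n - 1) * (z + (1 - z) ^ 2 / (4 * tensionConst μ k)) := by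
  obtain ⟨p, rfl⟩ := Nat.exists_eq_succ_of_ne_zero hn
  have hc : (tensionConst μ k : ℂ) ≠ 0 := ofReal_ne_zero.mpr (tensionConst_pos μ k).ne'
  set c : ℂ := (tensionConst μ k : ℂ)
  calc symbolNS (p + 1) k μ z
      = ∑ α ∈ Finset.range (p + 3), (2 ^ (p + 2) * c)⁻¹ * (((p + 2).choose α : ℂ) * z ^ α +
          4 * (c - 1) * ((binomZ p (α - 1) : ℂ) * z ^ α)) := by
        refine Finset.sum_congr rfl fun α hα ↦ ?_
        rw [maskNS_eq_of_le μ hk (Finset.mem_range_succ_iff.mp hα)]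
        push_cast
        ring
    _ = (2 ^ (p + 2) * c)⁻¹ * ((1 + z) ^ (p + 2) + 4 * (c - 1) * (z * (1 + z) ^ p)) := by
        rw [← Finset.mul_sum, Finset.sum_add_distrib, ← Finset.mul_sum, sum_range_choose_mul_pow,
          sum_range_binomZ_sub_one_mul_pow]
    _ = ((1 + z) / 2) ^ p * (z + (1 - z) ^ 2 / (4 * c)) := by
        rw [div_pow]
        field

theorem one_sub_exp_sq (θ : ℂ) :
    (1 - exp (-(I * θ))) ^ 2 = -4 * exp (-(I * θ)) * sin (θ / 2) ^ 2 := by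
  set u := exp (-(θ / 2) * I) with hu
  set v := exp (θ / 2 * I) with hv
  have hz : exp (-(I * θ)) = u ^ 2 := by
    rw [hu, ← exp_nat_mul]
    congr 1
    push_cast
    ring
  have huv : u * v = 1 := by
    rw [hu, hv, ← exp_add, neg_mul, neg_add_cancel, exp_zero]
  calc (1 - exp (-(I * θ))) ^ 2 = (u * v - u ^ 2) ^ 2 := by rw [hz, huv]
    _ = -4 * u ^ 2 * ((u - v) * I / 2) ^ 2 := by
      linear_combination u ^ 2 * (u - v) ^ 2 * I_sq
    _ = -4 * exp (-(I * θ)) * sin (θ / 2) ^ 2 := by rw [hz, sin]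

theorem symbolNS_exp (hn : n ≠ 0) (hk : k ≠ 0) (θ : ℝ) :
    symbolNS n k μ (exp (-(I * θ))) = ((1 + exp (-(I * θ))) / 2) ^ (n - 1) *
      (exp (-(I * θ)) * (1 - (tensionConst μ k)⁻¹ * Real.sin (θ / 2) ^ 2 : ℝ)) := by
  have hc : (tensionConst μ k : ℂ) ≠ 0 := ofReal_ne_zero.mpr (tensionConst_pos μ k).ne'
  rw [symbolNS_eq μ hn hk, one_sub_exp_sq]
  push_cast
  field

end Symbol

section RefinableFunction

theorem summable_inv_two_pow_sq (m : ℕ) : Summable fun j ↦ ((2 ^ (m + j + 2))⁻¹ : ℝ) ^ 2 := by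
  refine ((summable_geometric_of_lt_one (r := 1 / 4) (by norm_num) (by norm_num)).mul_left
    (((2 ^ (m + 2))⁻¹ : ℝ) ^ 2)).congr fun j ↦ ?_
  rw [add_right_comm, pow_add _ (m + 2), mul_inv, mul_pow, ← inv_pow 2 j, pow_right_comm]
  norm_num

theorem exp_neg_mul_two_pow_mul_pi_eq_one (m : ℕ) (α : ℤ) :
    exp (-(I * (2 ^ (m + 1) * Real.pi * α : ℝ)) * 2 ^ (-(m : ℤ))) = 1 := by
  refine exp_eq_one_iff.mpr ⟨-α, ?_⟩
  rw [zpow_neg, zpow_natCast]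
  push_cast
  field

variable {n m : ℕ} (μ : ℝ)

/-- The nowhere vanishing factor `F` of `Φ^{(n,m)}`, namely
`e^{-iω2^{-m}} ∏_{k ≥ m} (1 - c_k⁻¹ sin²(ω/2^{k+2}))`, with the product indexed by `j = k - m`. -/
noncomputable def strangFixCofactor (m : ℕ) (ω : ℝ) : ℂ :=
  exp (-(I * ω) * 2 ^ (-(m : ℤ))) *
    sinSqProd (fun j ↦ (tensionConst μ (m + j))⁻¹) (fun j ↦ (2 ^ (m + j + 2))⁻¹) ω

theorem continuous_strangFixCofactor (hm : m ≠ 0) : Continuous (strangFixCofactor μ m) := by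
  have hprod := continuous_sinSqProd
    (fun j ↦ (abs_inv_tensionConst_lt_one μ (show m + j ≠ 0 by omega)).le)
    (summable_inv_two_pow_sq m)
  unfold strangFixCofactor
  fun_prop

theorem strangFixCofactor_ne_zero (hm : m ≠ 0) (ω : ℝ) : strangFixCofactor μ m ω ≠ 0 :=
  mul_ne_zero (exp_ne_zero _) <| ofReal_ne_zero.mpr <|
    sinSqProd_ne_zero (fun j ↦ abs_inv_tensionConst_lt_one μ (show m + j ≠ 0 by omega))
      (summable_inv_two_pow_sq m) ω

theorem partialProdNS_add_eq (hn : n ≠ 0) (hm : m ≠ 0) (ω : ℝ) (N : ℕ) {w : ℂ}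
    (hw : w = -(I * ω) * 2 ^ (-(m : ℤ))) :
    partialProdNS n m μ ω (N + m) =
      (∏ i ∈ Finset.range N, (1 + exp (w / 2 ^ (i + 1))) / 2) ^ (n - 1) *
        ((∏ i ∈ Finset.range N, exp (w / 2 ^ (i + 1))) *
          (∏ i ∈ Finset.range N,
            (1 - (tensionConst μ (m + i))⁻¹ * Real.sin ((2 ^ (m + i + 2))⁻¹ * ω) ^ 2) : ℝ)) := by
  rw [partialProdNS, Finset.prod_Ico_eq_prod_range, Nat.add_sub_cancel, ofReal_prod,
    ← Finset.prod_pow, ← Finset.prod_mul_distrib, ← Finset.prod_mul_distrib]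
  refine Finset.prod_congr rfl fun i _ ↦ ?_
  have harg : -(I * (ω : ℂ)) / 2 ^ (m + i + 1) = -(I * (ω / 2 ^ (m + i + 1) : ℝ)) := by
    push_cast
    ring
  have hscale : w / 2 ^ (i + 1) = -(I * (ω / 2 ^ (m + i + 1) : ℝ)) := by
    rw [hw, zpow_neg, zpow_natCast]
    push_cast
    field
  have hhalf : ω / 2 ^ (m + i + 1) / 2 = (2 ^ (m + i + 2))⁻¹ * ω := by
    field
  rw [harg, hscale, symbolNS_exp μ hn (by omega), hhalf]

theorem tendsto_partialProdNS (hn : n ≠ 0) (hm : m ≠ 0) {ω : ℝ} (hω : ω ≠ 0) :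
    Tendsto (partialProdNS n m μ ω) atTop
      (𝓝 (((1 - exp (-(I * ω) * 2 ^ (-(m : ℤ)))) / (I * ω * 2 ^ (-(m : ℤ)))) ^ (n - 1) *
        strangFixCofactor μ m ω)) := by
  have hw : -(I * (ω : ℂ)) * 2 ^ (-(m : ℤ)) ≠ 0 := by simp [hω]
  have hsin := (hasProd_sinSqProd
    (fun j ↦ (abs_inv_tensionConst_lt_one μ (show m + j ≠ 0 by omega)).le)
    (summable_inv_two_pow_sq m) ω).tendsto_prod_nat.ofReal
  have hlim := ((tendsto_prod_one_add_exp_div_two hw).pow (n - 1)).mul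
    ((tendsto_prod_exp_div_two_pow (-(I * ω) * 2 ^ (-(m : ℤ)))).mul hsin)
  rw [← tendsto_add_atTop_iff_nat m]
  convert hlim using 2 with N
  · exact partialProdNS_add_eq μ hn hm ω N rfl
  · rw [strangFixCofactor, ← neg_div_neg_eq, neg_sub, neg_mul]

end RefinableFunction

theorem strang_fix_general {n m : ℕ} (hn : 2 ≤ n) (hm : 1 ≤ m) (μ : ℝ) {Φ : ℝ → ℂ}
    (hΦ : ∀ ω, Tendsto (partialProdNS n m μ ω) atTop (𝓝 (Φ ω))) :
    ∃ F : ℝ → ℂ, Continuous F ∧ (∀ ω, F ω ≠ 0) ∧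
      (∀ ω, ω ≠ 0 →
        Φ ω = ((1 - exp (-(I * ω) * 2 ^ (-(m : ℤ)))) / (I * ω * 2 ^ (-(m : ℤ)))) ^ (n - 1) *
          F ω) ∧
      (∀ α : ℤ, α ≠ 0 → Φ (2 ^ (m + 1) * Real.pi * α) = 0) := by
  have hm' : m ≠ 0 := by omega
  have hfactor (ω : ℝ) (hω : ω ≠ 0) := tendsto_nhds_unique (hΦ ω)
    (tendsto_partialProdNS μ (show n ≠ 0 by omega) hm' hω)
  refine ⟨strangFixCofactor μ m, continuous_strangFixCofactor μ hm',
    strangFixCofactor_ne_zero μ hm', hfactor, fun α hα ↦ ?_⟩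
  rw [hfactor _ (by simp [hα, Real.pi_ne_zero]), exp_neg_mul_two_pow_mul_pi_eq_one, sub_self,
    zero_div, zero_pow (by omega), zero_mul]

/-- Strang–Fix conditions (Corollary 4.2, case `m ≥ 1`): `Φ^{(n,m)}` factors as
`((1 − e^{-iω2^{-m}})/(iω2^{-m}))^{n-1}` times a continuous nowhere-vanishing function;
in particular it vanishes (to order exactly `n − 1`) at `ω = 2^{m+1}πα`, `α ∈ ℤ \ {0}`. -/
theorem strang_fix (n : ℕ) (hn : 2 ≤ n) (μ : ℝ) (hμ : 1 < μ) (m : ℕ) (hm : 1 ≤ m)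
    (Φ : ℝ → ℂ)
    (hΦ : ∀ ω : ℝ, Tendsto (fun N => partialProdNS n m μ ω N) atTop (nhds (Φ ω))) :
    ∃ F : ℝ → ℂ, Continuous F ∧ (∀ ω : ℝ, F ω ≠ 0) ∧
      (∀ ω : ℝ, ω ≠ 0 →
        Φ ω = ((1 - Complex.exp (-(Complex.I * ω) * 2 ^ (-(m : ℤ)))) /
          (Complex.I * ω * 2 ^ (-(m : ℤ)))) ^ (n - 1) * F ω) ∧
      (∀ α : ℤ, α ≠ 0 → Φ (2 ^ (m + 1) * Real.pi * α) = 0) :=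
  strang_fix_general hn hm μ hΦ
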